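/- For every connected graph G with maximum degree Δ(G) ≥ 1, h(G) ≥ ⌊√(Δ(G))⌋. In particular, if G has n vertices and e edges, then h(G) ≥ ⌊√(2e/n)⌋. -/

import Mathlib

open Finset

/-- The multiset of pairwise distances between distinct vertices of `S` in `G`
(one entry for each unordered pair of distinct vertices of `S`). -/
noncomputable def distMultiset {V : Type*} (G : SimpleGraph V) (S : Finset V) : Multiset ℕ :=
  letI := Classical.decEq V
  (S.sym2.filter fun p => ¬ p.IsDiag).val.map
    (Sym2.lift ⟨fun a b => G.dist a b, fun _ _ => SimpleGraph.dist_comm⟩)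

/-- Two disjoint vertex sets are homometric if their distance multisets coincide. -/
def Homometric {V : Type*} (G : SimpleGraph V) (S₁ S₂ : Finset V) : Prop :=
  Disjoint S₁ S₂ ∧ distMultiset G S₁ = distMultiset G S₂

/-- `h(G)`: the largest `h` such that `G` contains two disjoint homometric sets of
size `h` each. -/
noncomputable def homNumber {V : Type*} (G : SimpleGraph V) : ℕ :=
  sSup {h : ℕ | ∃ S₁ S₂ : Finset V, Homometric G S₁ S₂ ∧ S₁.card = h ∧ S₂.card = h}

/-!
Let `v` have maximum degree `Δ` and let `k = ⌊√Δ⌋`. Distances between distinct vertices of the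
closed neighbourhood of `v` are `1` or `2`, so the distance multiset of a `k`-subset is determined
by the number of `1`s, which takes at most `k.choose 2 + 1` values. Regard this number as a colour.
By the Lovász–Kneser theorem, colouring the `k`-subsets of a set of `Δ + 1` vertices so that
disjoint subsets differ takes `Δ + 1 - 2 * k + 2 > k.choose 2 + 1` colours, so two disjoint
`k`-subsets share one.

The Lovász–Kneser theorem rests on a combinatorial Borsuk–Ulam theorem in the style of Ky Fan: for
an antipodal sign on signed sets, the number of maximal flags with signs `1, -1, 1, …` is odd. To
pass from dimension `d` to `d + 1`, multiply the sign at step `i` by `(-1) ^ i`, and let `N a` count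
the flags of the upper hemisphere with signs `1` before step `a` and `-1` from step `a` on.
Exchanging two consecutive steps shows that `N a + N (a + 1)` is even for `a < d`. Pairing the
facets that differ only at the last step, and keeping those that rest on the equator, shows that
`N d + N (d + 1)` has the parity of the count in dimension `d`. Hence so does `N 0 + N (d + 1)`,
which is the count in dimension `d + 1` by antipodality.

For the Kneser bound, let the sign of a signed set tell which of its two parts contains a `k`-subset
of larger colour. Along an alternating flag the larger of the two maximal colours then strictly
increases.
-/

theorem even_card_of_involution {α : Type*} {s : Finset α} (f : α → α)
    (maps : ∀ a ∈ s, f a ∈ s) (ne : ∀ a ∈ s, f a ≠ a) (invol : ∀ a ∈ s, f (f a) = a) :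
    Even #s := by
  rw [← ZMod.natCast_eq_zero_iff_even, ← nsmul_one, ← sum_const]
  exact sum_involution (fun a _ ↦ f a) (fun _ _ ↦ CharTwo.add_self_eq_zero 1)
    (fun a ha _ ↦ ne a ha) maps invol

theorem swap_apply_le_iff {n : ℕ} {i j k : Fin n} (hij : (j : ℕ) = i + 1) (hk : k ≠ i)
    (x : Fin n) : Equiv.swap i j x ≤ k ↔ x ≤ k := by
  rw [Equiv.swap_apply_def]
  grind

/-- A maximal flag of signed subsets of `Fin n`, that is, a facet of the barycentric subdivision of
the boundary of the `n`-dimensional cross-polytope. The pair `w` encodes the flag in which the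
element `c` enters at step `w.1 c` with sign `w.2 c`. -/
abbrev SignedFlag (n : ℕ) := Equiv.Perm (Fin n) × (Fin n → ℤˣ)

namespace SignedFlag

variable {n : ℕ}

/-- The elements of sign `ε` in the `i`-th signed set of the flag `w`. -/
def part (w : SignedFlag n) (ε : ℤˣ) (i : Fin n) : Finset (Fin n) := {c | w.1 c ≤ i ∧ w.2 c = ε}

theorem mem_part {w : SignedFlag n} {ε : ℤˣ} {i c : Fin n} :
    c ∈ w.part ε i ↔ w.1 c ≤ i ∧ w.2 c = ε := by
  simp [part]

theorem part_mono (w : SignedFlag n) (ε : ℤˣ) : Monotone (w.part ε) :=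
  fun _ _ hij _ hc ↦ mem_part.2 ((mem_part.1 hc).imp_left hij.trans')

theorem disjoint_part (w : SignedFlag n) (i : Fin n) : Disjoint (w.part 1 i) (w.part (-1) i) := by
  rw [disjoint_left]
  intro c hc hc'
  exact absurd ((mem_part.1 hc).2.symm.trans (mem_part.1 hc').2) (by decide)

theorem card_part_add_card_part (w : SignedFlag n) (i : Fin n) :
    #(w.part 1 i) + #(w.part (-1) i) = i + 1 := by
  have hunion : #{c | w.1 c ≤ i} = #(Iic i) := card_equiv w.1 (by simp)
  rw [← Fin.card_Iic, ← hunion,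
    ← card_filter_add_card_filter_not (s := {c | w.1 c ≤ i}) (fun c ↦ w.2 c = 1),
    filter_filter, filter_filter]
  simp only [Int.units_ne_iff_eq_neg, part]

theorem part_ne_part (w : SignedFlag n) (i : Fin n) : w.part 1 i ≠ w.part (-1) i := by
  intro h
  have hcard := w.card_part_add_card_part i
  have hempty : w.part (-1) i = ∅ := disjoint_self.1 (h ▸ w.disjoint_part i)
  simp [h, hempty] at hcard

/-- A sign attached to the signed sets with positive part `P` and negative part `Q` is antipodal if
it is odd under `(P, Q) ↦ (Q, P)`. Disjoint sets are distinct unless both are empty. -/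
def IsAntipodal {α : Type*} (s : Finset α → Finset α → ℤˣ) : Prop :=
  ∀ P Q, Disjoint P Q → P ≠ Q → s Q P = -s P Q

/-- The sign of the `i`-th signed set of `w` relative to the alternating pattern `1, -1, 1, …`. -/
def relSign (s : Finset (Fin n) → Finset (Fin n) → ℤˣ) (w : SignedFlag n) (i : Fin n) : ℤˣ :=
  (-1) ^ (i : ℕ) * s (w.part 1 i) (w.part (-1) i)

/-- The flags of the signed subsets of the first `d` coordinates, each completed to a maximal flag
by adding the remaining coordinates in increasing order with sign `1`. -/
def initialFlags (n d : ℕ) : Finset (SignedFlag n) :=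
  {w | ∀ c : Fin n, d ≤ c → w.1 c = c ∧ w.2 c = 1}

/-- The facets of the upper hemisphere of the sphere on the coordinates `0, …, d`. -/
def hemisphere (d : Fin n) : Finset (SignedFlag n) := {w ∈ initialFlags n (d + 1) | w.2 d = 1}

/-- The initial flags whose signs alternate, starting from `1`, along the first `d` steps. -/
def alternatingFlags (s : Finset (Fin n) → Finset (Fin n) → ℤˣ) (d : ℕ) : Finset (SignedFlag n) :=
  {w ∈ initialFlags n d | ∀ j : Fin n, j < d → relSign s w j = 1}

/-- The flags of the hemisphere whose relative sign is `1` before step `a` and `-1` from step `a` up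
to step `d`. -/
def switchingFlags (s : Finset (Fin n) → Finset (Fin n) → ℤˣ) (d : Fin n) (a : ℕ) :
    Finset (SignedFlag n) :=
  {w ∈ hemisphere d | ∀ j ≤ d, relSign s w j = if j < a then 1 else -1}

/-- The flags of the hemisphere whose relative sign is `1` before step `i` and `-1` after step `i`
up to step `d`, with no condition at step `i`. -/
def looseFlags (s : Finset (Fin n) → Finset (Fin n) → ℤˣ) (d i : Fin n) : Finset (SignedFlag n) :=
  {w ∈ hemisphere d | ∀ j ≤ d, j ≠ i → relSign s w j = if j < i then 1 else -1}

variable {s : Finset (Fin n) → Finset (Fin n) → ℤˣ} {w w' : SignedFlag n} {d i j : Fin n}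

theorem mem_initialFlags {d : ℕ} :
    w ∈ initialFlags n d ↔ ∀ c : Fin n, d ≤ c → w.1 c = c ∧ w.2 c = 1 := by
  simp [initialFlags]

theorem mem_hemisphere :
    w ∈ hemisphere d ↔ (∀ c, d < c → w.1 c = c ∧ w.2 c = 1) ∧ w.2 d = 1 := by
  simp only [hemisphere, mem_filter, mem_initialFlags, Nat.succ_le_iff, Fin.lt_def]

theorem relSign_congr (h : ∀ ε, w.part ε i = w'.part ε i) : relSign s w i = relSign s w' i := by
  simp only [relSign, h]

theorem card_switchingFlags_add_card_switchingFlags (hi : i ≤ d) :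
    #(switchingFlags s d i) + #(switchingFlags s d (i + 1)) = #(looseFlags s d i) := by
  have hneg : {w ∈ looseFlags s d i | relSign s w i = -1} = switchingFlags s d i := by
    ext w
    grind [switchingFlags, looseFlags]
  have hpos : {w ∈ looseFlags s d i | ¬relSign s w i = -1} = switchingFlags s d (i + 1) := by
    ext w
    have hunit : relSign s w i ≠ -1 ↔ relSign s w i = 1 := by
      rw [Int.units_ne_iff_eq_neg, neg_neg]
    grind [switchingFlags, looseFlags]
  rw [← hneg, ← hpos, card_filter_add_card_filter_not]

/-- Exchanging the steps at which the two elements entering at steps `i` and `j` do so. -/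
def swapSteps (i j : Fin n) (w : SignedFlag n) : SignedFlag n := (Equiv.swap i j * w.1, w.2)

theorem part_swapSteps {k : Fin n} (hij : (j : ℕ) = i + 1) (hk : k ≠ i) (ε : ℤˣ) :
    (swapSteps i j w).part ε k = w.part ε k := by
  ext c
  simp only [mem_part, swapSteps, Equiv.Perm.mul_apply, swap_apply_le_iff hij hk]

theorem swapSteps_mem_hemisphere (hi : i ≤ d) (hj : j ≤ d) (hw : w ∈ hemisphere d) :
    swapSteps i j w ∈ hemisphere d := by
  rw [mem_hemisphere] at hw ⊢
  refine ⟨fun c hc ↦ ⟨?_, (hw.1 c hc).2⟩, hw.2⟩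
  rw [swapSteps, Equiv.Perm.mul_apply, (hw.1 c hc).1,
    Equiv.swap_apply_of_ne_of_ne (hi.trans_lt hc).ne' (hj.trans_lt hc).ne']

theorem even_card_looseFlags_of_lt (hid : i < d) : Even #(looseFlags s d i) := by
  obtain ⟨j, hij⟩ : ∃ j : Fin n, (j : ℕ) = i + 1 := ⟨⟨i + 1, by lia⟩, rfl⟩
  refine even_card_of_involution (swapSteps i j) (fun w hw ↦ ?_) (fun w _ h ↦ ?_) fun w _ ↦ ?_
  · obtain ⟨hhemi, hsign⟩ := mem_filter.1 hw
    refine mem_filter.2 ⟨swapSteps_mem_hemisphere hid.le (by lia) hhemi, fun k hk hki ↦ ?_⟩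
    rw [relSign_congr (part_swapSteps hij hki), hsign k hk hki]
  · have hswap : Equiv.swap i j = 1 := mul_eq_right.1 (congrArg Prod.fst h)
    have := Equiv.swap_eq_one_iff.1 hswap
    lia
  · simp [swapSteps, ← mul_assoc]

/-- Changing the sign of the element that enters at step `d`. -/
def negStep (d : Fin n) (w : SignedFlag n) : SignedFlag n :=
  (w.1, Function.update w.2 (w.1.symm d) (-w.2 (w.1.symm d)))

theorem part_negStep (hi : i < d) (ε : ℤˣ) : (negStep d w).part ε i = w.part ε i := by
  ext c
  rw [mem_part, mem_part]
  refine and_congr_right fun hc ↦ ?_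
  have hcd : c ≠ w.1.symm d := fun h ↦ hi.not_ge (by simpa [h, negStep] using hc)
  simp [negStep, hcd]

theorem negStep_mem_hemisphere (hd : w.1 d ≠ d) (hw : w ∈ hemisphere d) :
    negStep d w ∈ hemisphere d := by
  rw [mem_hemisphere] at hw ⊢
  have hsign : ∀ c, w.1 c ≠ d → (negStep d w).2 c = w.2 c := fun c hc ↦
    Function.update_of_ne (fun h ↦ hc (by simp [h])) _ _
  refine ⟨fun c hc ↦ ⟨(hw.1 c hc).1, ?_⟩, (hsign d hd).trans hw.2⟩
  rw [hsign c ((hw.1 c hc).1.trans_ne hc.ne'), (hw.1 c hc).2]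

theorem filter_looseFlags_self :
    {w ∈ looseFlags s d d | w.1 d = d} = alternatingFlags s d := by
  ext w
  grind [looseFlags, mem_hemisphere, alternatingFlags, mem_initialFlags]

theorem even_card_looseFlags_self_iff :
    Even #(looseFlags s d d) ↔ Even #(alternatingFlags s d) := by
  have hmoved : Even #{w ∈ looseFlags s d d | ¬w.1 d = d} := by
    refine even_card_of_involution (negStep d) (fun w hw ↦ ?_) (fun w _ h ↦ ?_) fun w _ ↦ ?_
    · obtain ⟨hloose, hd⟩ := mem_filter.1 hw
      obtain ⟨hhemi, hsign⟩ := mem_filter.1 hloose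
      refine mem_filter.2 ⟨mem_filter.2 ⟨negStep_mem_hemisphere hd hhemi, fun j hj hjd ↦ ?_⟩, hd⟩
      rw [relSign_congr (part_negStep (lt_of_le_of_ne hj hjd)), hsign j hj hjd]
    · have := congrFun (congrArg Prod.snd h) (w.1.symm d)
      simp [negStep] at this
    · simp [negStep]
  rw [← card_filter_add_card_filter_not (fun w ↦ w.1 d = d), filter_looseFlags_self,
    Nat.even_add, iff_true_right hmoved]

/-- The antipodal map of the sphere on the coordinates `0, …, d`. -/
def antipode (d : Fin n) (w : SignedFlag n) : SignedFlag n :=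
  (w.1, fun c ↦ if c ≤ d then -w.2 c else w.2 c)

theorem antipode_antipode : antipode d (antipode d w) = w := by
  refine Prod.ext rfl (funext fun c ↦ ?_)
  by_cases hc : c ≤ d <;> simp [antipode, hc]

theorem antipode_mem_initialFlags (hw : w ∈ initialFlags n (d + 1)) :
    antipode d w ∈ initialFlags n (d + 1) := by
  grind [mem_initialFlags, antipode]

theorem le_of_mem_initialFlags {c : Fin n} (hw : w ∈ initialFlags n (d + 1)) (hc : w.1 c ≤ d) :
    c ≤ d := by
  grind [mem_initialFlags]

theorem part_antipode (hw : w ∈ initialFlags n (d + 1)) (hi : i ≤ d) (ε : ℤˣ) :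
    (antipode d w).part ε i = w.part (-ε) i := by
  ext c
  rw [mem_part, mem_part]
  refine and_congr_right fun hc ↦ ?_
  simp [antipode, le_of_mem_initialFlags hw (le_trans hc hi), neg_eq_iff_eq_neg]

theorem relSign_antipode (hs : IsAntipodal s) (hw : w ∈ initialFlags n (d + 1)) (hi : i ≤ d) :
    relSign s (antipode d w) i = -relSign s w i := by
  rw [relSign, relSign, part_antipode hw hi, part_antipode hw hi, neg_neg,
    hs _ _ (w.disjoint_part i) (w.part_ne_part i), mul_neg]

theorem mem_alternatingFlags_succ :
    w ∈ alternatingFlags s (d + 1) ↔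
      w ∈ initialFlags n (d + 1) ∧ ∀ j ≤ d, relSign s w j = 1 := by
  simp only [alternatingFlags, mem_filter, Nat.lt_succ_iff, Fin.le_def]

theorem mem_switchingFlags_zero :
    w ∈ switchingFlags s d 0 ↔
      (w ∈ initialFlags n (d + 1) ∧ w.2 d = 1) ∧ ∀ j ≤ d, relSign s w j = -1 := by
  simp [switchingFlags, hemisphere]

theorem card_alternatingFlags_succ (hs : IsAntipodal s) :
    #(alternatingFlags s (d + 1)) = #(switchingFlags s d 0) + #(switchingFlags s d (d + 1)) := by
  have hupper : {w ∈ alternatingFlags s (d + 1) | w.2 d = 1} = switchingFlags s d (d + 1) := by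
    ext w
    grind [alternatingFlags, switchingFlags, hemisphere]
  have hlower :
      #{w ∈ alternatingFlags s (d + 1) | ¬w.2 d = 1} = #(switchingFlags s d 0) := by
    refine card_nbij' (antipode d) (antipode d) (fun w hw ↦ ?_) (fun w hw ↦ ?_)
      (fun _ _ ↦ antipode_antipode) fun _ _ ↦ antipode_antipode
    · obtain ⟨halt, hsign⟩ := mem_filter.1 hw
      obtain ⟨hinit, hone⟩ := mem_alternatingFlags_succ.1 halt
      refine mem_switchingFlags_zero.2 ⟨⟨antipode_mem_initialFlags hinit, ?_⟩, fun j hj ↦ ?_⟩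
      · simp [antipode, Int.units_ne_iff_eq_neg.1 hsign]
      · rw [relSign_antipode hs hinit hj, hone j hj]
    · obtain ⟨⟨hinit, hsign⟩, hneg⟩ := mem_switchingFlags_zero.1 hw
      refine mem_filter.2 ⟨mem_alternatingFlags_succ.2
        ⟨antipode_mem_initialFlags hinit, fun j hj ↦ ?_⟩, ?_⟩
      · rw [relSign_antipode hs hinit hj, hneg j hj, neg_neg]
      · simp [antipode, hsign]
  rw [← card_filter_add_card_filter_not (fun w ↦ w.2 d = 1), hupper, hlower, add_comm]

theorem even_card_switchingFlags_iff {a : ℕ} (ha : a ≤ d) :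
    Even #(switchingFlags s d a) ↔ Even #(switchingFlags s d 0) := by
  induction a with
  | zero => rfl
  | succ a ih =>
    have had : a < d := ha
    have heven := even_card_looseFlags_of_lt (s := s) (i := ⟨a, by lia⟩) had
    rw [← card_switchingFlags_add_card_switchingFlags had.le, Nat.even_add] at heven
    exact heven.symm.trans (ih had.le)

theorem even_card_alternatingFlags_succ_iff (hs : IsAntipodal s) :
    Even #(alternatingFlags s (d + 1)) ↔ Even #(alternatingFlags s d) := by
  rw [card_alternatingFlags_succ hs, ← even_card_looseFlags_self_iff,
    ← card_switchingFlags_add_card_switchingFlags le_rfl, Nat.even_add, Nat.even_add,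
    even_card_switchingFlags_iff le_rfl]

theorem card_alternatingFlags_zero : #(alternatingFlags s 0) = 1 := by
  rw [card_eq_one]
  refine ⟨(1, 1), ?_⟩
  ext w
  simp [alternatingFlags, mem_initialFlags, Prod.ext_iff, Equiv.ext_iff, funext_iff, forall_and]

theorem odd_card_alternatingFlags (hs : IsAntipodal s) {d : ℕ} (hd : d ≤ n) :
    Odd #(alternatingFlags s d) := by
  induction d with
  | zero => simp [card_alternatingFlags_zero]
  | succ d ih =>
    rw [← Nat.not_even_iff_odd, even_card_alternatingFlags_succ_iff (d := ⟨d, hd⟩) hs,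
      Nat.not_even_iff_odd]
    exact ih (by lia)

theorem exists_alternating (hs : IsAntipodal s) :
    ∃ w : SignedFlag n, ∀ i : Fin n, s (w.part 1 i) (w.part (-1) i) = (-1) ^ (i : ℕ) := by
  obtain ⟨w, hw⟩ := card_pos.1 (odd_card_alternatingFlags hs le_rfl).pos
  refine ⟨w, fun i ↦ ?_⟩
  have hone : relSign s w i = 1 := (mem_filter.1 hw).2 i i.isLt
  rw [relSign] at hone
  rw [eq_inv_of_mul_eq_one_right hone, Int.units_inv_eq_self]

/-- The sign comparing the values of `g` at the two parts of a signed set: `1` if the value at the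
positive part is at least the value at the negative part. -/
def compareSign {α β : Type*} [LinearOrder β] (g : Finset α → β) (P Q : Finset α) : ℤˣ :=
  if g P < g Q then -1 else 1

theorem isAntipodal_compareSign {α β : Type*} [LinearOrder β] {g : Finset α → β}
    (hg : Function.Injective g) : IsAntipodal (compareSign g) := by
  intro P Q _ hPQ
  rcases (hg.ne hPQ).lt_or_gt with h | h <;> simp [compareSign, h, h.not_gt]

theorem exists_alternating_lt {f : Finset (Fin n) → ℕ} {r : ℕ}
    (hne : ∀ P Q, Disjoint P Q → r ≤ #P + #Q → f P ≠ f Q) :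
    ∃ w : SignedFlag n, ∀ i : Fin n, r ≤ i + 1 →
      f (w.part (-(-1) ^ (i : ℕ)) i) < f (w.part ((-1) ^ (i : ℕ)) i) := by
  -- The second component breaks ties, which occur only below rank `r`.
  let g (P : Finset (Fin n)) : ℕ ×ₗ Colex (Finset (Fin n)) := toLex (f P, toColex P)
  have hg : Function.Injective g := fun P Q h ↦
    toColex_inj.1 (congrArg Prod.snd (toLex_inj.1 h))
  have hle {P Q} (h : g P ≤ g Q) : f P ≤ f Q := Prod.Lex.monotone_fst _ _ h
  obtain ⟨w, hw⟩ := exists_alternating (isAntipodal_compareSign hg)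
  refine ⟨w, fun i hi ↦ ?_⟩
  have hne' : f (w.part 1 i) ≠ f (w.part (-1) i) :=
    hne _ _ (w.disjoint_part i) (hi.trans_eq (w.card_part_add_card_part i).symm)
  have hsign := hw i
  rcases neg_one_pow_eq_or ℤˣ (i : ℕ) with h | h <;> rw [h] at hsign ⊢
  · have : ¬g (w.part 1 i) < g (w.part (-1) i) := fun hlt ↦ by simp [compareSign, hlt] at hsign
    exact (hle (not_lt.1 this)).lt_of_ne hne'.symm
  · have : g (w.part 1 i) < g (w.part (-1) i) := by
      by_contra hlt
      simp [compareSign, hlt] at hsign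
    rw [neg_neg]
    exact (hle this.le).lt_of_ne hne'

end SignedFlag

theorem lt_apply_univ_add_of_monotone {n r : ℕ} {f : Finset (Fin n) → ℕ} (hf : Monotone f)
    (hne : ∀ P Q, Disjoint P Q → r ≤ #P + #Q → f P ≠ f Q) : n < f univ + r := by
  obtain ⟨w, hw⟩ := SignedFlag.exists_alternating_lt hne
  have hr : r ≠ 0 := fun hr ↦ hne ∅ ∅ (disjoint_empty_left _) (by simp [hr]) rfl
  have hgrowth : ∀ i (hi : i < n), r ≤ i + 1 → i + 1 < f (w.part ((-1) ^ i) ⟨i, hi⟩) + r := by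
    intro i hi hri
    induction i with
    | zero =>
      have hfirst := hw ⟨0, hi⟩ hri
      lia
    | succ i ih =>
      have hlast := hw ⟨i + 1, hi⟩ hri
      rcases hri.eq_or_lt with hri | hri
      · lia
      · have hmono : f (w.part ((-1) ^ i) ⟨i, by lia⟩) ≤ f (w.part ((-1) ^ i) ⟨i + 1, hi⟩) :=
          hf (w.part_mono _ (Fin.mk_le_mk.2 i.le_succ))
        have := ih (by lia) (by lia)
        rw [pow_succ, mul_neg_one, neg_neg] at hlast
        rw [pow_succ, mul_neg_one]
        lia
  by_contra! hn
  have hlt := hgrowth (n - 1) (by lia) (by lia)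
  have := hf (subset_univ (w.part ((-1) ^ (n - 1)) ⟨n - 1, by lia⟩))
  lia

theorem card_lt_apply_add_of_monotone {α : Type*} {T : Finset α} {f : Finset α → ℕ} {r : ℕ}
    (hf : Monotone f)
    (hne : ∀ P ⊆ T, ∀ Q ⊆ T, Disjoint P Q → r ≤ #P + #Q → f P ≠ f Q) : #T < f T + r := by
  let e : Fin #T ↪ α := T.equivFin.symm.toEmbedding.trans (Function.Embedding.subtype _)
  have hmem (i : Fin #T) : e i ∈ T := (T.equivFin.symm i).2
  have hsub (P : Finset (Fin #T)) : P.map e ⊆ T := fun x hx ↦ by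
    obtain ⟨i, -, rfl⟩ := mem_map.1 hx
    exact hmem i
  refine (lt_apply_univ_add_of_monotone (f := fun P ↦ f (P.map e))
    (fun P Q hPQ ↦ hf (map_subset_map.2 hPQ)) fun P Q hPQ hr ↦ ?_).trans_le
    (Nat.add_le_add_right (hf (hsub univ)) r)
  exact hne _ (hsub P) _ (hsub Q) ((disjoint_map e).2 hPQ) (by rwa [card_map, card_map])

/-- The largest colour of a `k`-element subset of `P`, shifted by one so that it is `0` exactly when
`P` has fewer than `k` elements. -/
def maxColor {α : Type*} (c : Finset α → ℕ) (k : ℕ) (P : Finset α) : ℕ :=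
  (P.powersetCard k).sup fun F ↦ c F + 1

section maxColor

variable {α : Type*} {c : Finset α → ℕ} {k : ℕ} {P : Finset α}

theorem maxColor_mono : Monotone (maxColor c k) :=
  fun _ _ hPQ ↦ sup_mono (powersetCard_mono hPQ)

theorem maxColor_pos (h : k ≤ #P) : 0 < maxColor c k P := by
  obtain ⟨F, hF⟩ := powersetCard_nonempty.2 h
  exact (Nat.succ_pos _).trans_le (le_sup (f := fun F ↦ c F + 1) hF)

theorem exists_maxColor_eq (h : 0 < maxColor c k P) :
    ∃ F ⊆ P, #F = k ∧ maxColor c k P = c F + 1 := by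
  have hne : (P.powersetCard k).Nonempty := by
    by_contra hempty
    simp [maxColor, not_nonempty_iff_eq_empty.1 hempty] at h
  obtain ⟨F, hF, hsup⟩ := exists_mem_eq_sup _ hne fun F ↦ c F + 1
  obtain ⟨hsub, hcard⟩ := mem_powersetCard.1 hF
  exact ⟨F, hsub, hcard, hsup⟩

end maxColor

theorem lovasz_kneser {α : Type*} {T : Finset α} {c : Finset α → ℕ} {k m : ℕ}
    (hc : ∀ F ⊆ T, #F = k → c F < m) (hT : m + 2 * k ≤ #T + 1) :
    ∃ F ⊆ T, ∃ F' ⊆ T, #F = k ∧ #F' = k ∧ Disjoint F F' ∧ c F = c F' := by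
  rcases k.eq_zero_or_pos with rfl | hk
  · exact ⟨∅, empty_subset T, ∅, empty_subset T, rfl, rfl, disjoint_empty_left _, rfl⟩
  by_contra! hproper
  have hne : ∀ P ⊆ T, ∀ Q ⊆ T, Disjoint P Q → 2 * k - 1 ≤ #P + #Q →
      maxColor c k P ≠ maxColor c k Q := by
    intro P hP Q hQ hPQ hcard heq
    have hpos : 0 < maxColor c k P := by
      by_cases h : k ≤ #P
      · exact maxColor_pos h
      · exact heq ▸ maxColor_pos (by lia)
    obtain ⟨F, hF, hFk, hFmax⟩ := exists_maxColor_eq hpos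
    obtain ⟨F', hF', hFk', hFmax'⟩ := exists_maxColor_eq (heq ▸ hpos)
    exact hproper F (hF.trans hP) F' (hF'.trans hQ) hFk hFk' (hPQ.mono hF hF') (by lia)
  have hlt := card_lt_apply_add_of_monotone maxColor_mono hne
  have hle : maxColor c k T ≤ m := Finset.sup_le fun F hF ↦
    hc F (mem_powersetCard.1 hF).1 (mem_powersetCard.1 hF).2
  lia

theorem card_distMultiset {V : Type*} (G : SimpleGraph V) (S : Finset V) :
    (distMultiset G S).card = (#S).choose 2 := by
  classical
  rw [distMultiset, Multiset.card_map, card_val, ← Sym2.card_image_offDiag,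
    ← Sym2.filter_image_mk_not_isDiag, sym2_eq_image]

theorem eq_one_or_eq_two_of_mem_distMultiset {V : Type*} {G : SimpleGraph V} {S : Finset V} {v : V}
    (hS : ∀ x ∈ S, x = v ∨ G.Adj v x) {t : ℕ} (ht : t ∈ distMultiset G S) : t = 1 ∨ t = 2 := by
  classical
  obtain ⟨p, hp, rfl⟩ := Multiset.mem_map.1 ht
  obtain ⟨hpS, hdiag⟩ := mem_filter.1 hp
  induction p with
  | _ a b =>
    obtain ⟨ha, hb⟩ := mk_mem_sym2_iff.1 hpS
    have hab : a ≠ b := by simpa using hdiag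
    obtain ⟨p, hp⟩ : ∃ p : G.Walk a b, p.length ≤ 2 := by
      rcases hS a ha with rfl | ha <;> rcases hS b hb with rfl | hb
      · exact absurd rfl hab
      · exact ⟨hb.toWalk, by simp⟩
      · exact ⟨ha.symm.toWalk, by simp⟩
      · exact ⟨.cons ha.symm hb.toWalk, by simp⟩
    have hpos : 0 < G.dist a b := p.reachable.pos_dist_of_ne hab
    have hle : G.dist a b ≤ 2 := (SimpleGraph.dist_le p).trans hp
    change G.dist a b = 1 ∨ G.dist a b = 2
    lia

theorem multiset_eq_of_count_eq_of_card_eq {α : Type*} [DecidableEq α] {M N : Multiset α} {a b : α}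
    (hM : ∀ t ∈ M, t = a ∨ t = b) (hN : ∀ t ∈ N, t = a ∨ t = b)
    (hcount : M.count a = N.count a) (hcard : M.card = N.card) : M = N := by
  have hdecomp : ∀ M : Multiset α, (∀ t ∈ M, t = a ∨ t = b) →
      M = .replicate (M.count a) a + .replicate (M.card - M.count a) b := by
    intro M hM
    have hsplit := M.filter_add_not (· = a)
    have hrest : M.filter (¬ · = a) = .replicate (M.card - M.count a) b := by
      refine Multiset.eq_replicate.2 ⟨?_, fun t ht ↦ ?_⟩
      · have := congrArg Multiset.card hsplit
        rw [Multiset.card_add, Multiset.filter_eq', Multiset.card_replicate] at this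
        lia
      · obtain ⟨htM, hta⟩ := Multiset.mem_filter.1 ht
        exact (hM t htM).resolve_left hta
    rw [← hrest, ← Multiset.filter_eq', hsplit]
  rw [hdecomp M hM, hdecomp N hN, hcount, hcard]

theorem Homometric.card_le_homNumber {V : Type*} [Finite V] {G : SimpleGraph V} {S₁ S₂ : Finset V}
    (h : Homometric G S₁ S₂) (hcard : #S₁ = #S₂) : #S₁ ≤ homNumber G := by
  cases nonempty_fintype V
  refine le_csSup ⟨Fintype.card V, ?_⟩ ⟨S₁, S₂, h, rfl, hcard.symm⟩
  rintro _ ⟨T, -, -, rfl, -⟩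
  exact T.card_le_univ

theorem le_homNumber_of_le_degree {V : Type*} [Finite V] {G : SimpleGraph V} {v : V}
    [Fintype (G.neighborSet v)] {k : ℕ} (hk : k.choose 2 + 2 * k ≤ G.degree v + 1) :
    k ≤ homNumber G := by
  classical
  let T : Finset V := insert v (G.neighborFinset v)
  have hT : #T = G.degree v + 1 := by
    rw [card_insert_of_notMem (by simp), G.card_neighborFinset_eq_degree]
  have hstar {F : Finset V} (hF : F ⊆ T) : ∀ x ∈ F, x = v ∨ G.Adj v x := fun x hx ↦ by
    simpa [T] using hF hx
  obtain ⟨F, hF, F', hF', rfl, hcard, hdisj, hcount⟩ :=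
    lovasz_kneser (T := T) (k := k) (m := k.choose 2 + 1) (c := fun F ↦ (distMultiset G F).count 1)
      (fun F _ hcard ↦ by
        rw [Nat.lt_succ_iff, ← hcard, ← card_distMultiset G]
        exact Multiset.count_le_card 1 _)
      (by lia)
  refine Homometric.card_le_homNumber ⟨hdisj, ?_⟩ hcard.symm
  refine multiset_eq_of_count_eq_of_card_eq
    (fun _ ↦ eq_one_or_eq_two_of_mem_distMultiset (hstar hF))
    (fun _ ↦ eq_one_or_eq_two_of_mem_distMultiset (hstar hF')) hcount ?_
  rw [card_distMultiset, card_distMultiset, hcard]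

theorem choose_two_add_two_mul_le (k : ℕ) : k.choose 2 + 2 * k ≤ k ^ 2 + 1 := by
  induction k with
  | zero => simp
  | succ k ih =>
    rw [Nat.choose_succ_succ', Nat.choose_one_right]
    rcases k.eq_zero_or_pos with rfl | hk
    · simp
    · nlinarith

theorem two_mul_card_edgeFinset_le {V : Type*} [Fintype V] (G : SimpleGraph V)
    [DecidableRel G.Adj] : 2 * #G.edgeFinset ≤ G.maxDegree * Fintype.card V := by
  rw [← G.sum_degrees_eq_twice_card_edges, mul_comm]
  exact sum_le_card_nsmul univ _ _ fun v _ ↦ G.degree_le_maxDegree v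

theorem stmt3_general {V : Type*} [Fintype V] [Nonempty V] (G : SimpleGraph V)
    [DecidableRel G.Adj] :
    Nat.sqrt G.maxDegree ≤ homNumber G ∧
      ⌊Real.sqrt ((2 * (G.edgeFinset.card : ℝ)) / (Fintype.card V : ℝ))⌋₊ ≤ homNumber G := by
  obtain ⟨v, hv⟩ := G.exists_maximal_degree_vertex
  have hmax : Nat.sqrt G.maxDegree ≤ homNumber G := by
    refine le_homNumber_of_le_degree ((choose_two_add_two_mul_le _).trans ?_) (v := v)
    exact Nat.succ_le_succ ((Nat.sqrt_le' _).trans_eq hv)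
  have haverage : (2 * (#G.edgeFinset : ℝ)) / Fintype.card V ≤ G.maxDegree := by
    rw [div_le_iff₀ (by exact_mod_cast Fintype.card_pos)]
    exact_mod_cast two_mul_card_edgeFinset_le G
  refine ⟨hmax, le_trans ?_ hmax⟩
  rw [← Real.nat_floor_real_sqrt_eq_nat_sqrt]
  exact Nat.floor_le_floor (Real.sqrt_le_sqrt haverage)

/-- For every connected graph `G` with maximum degree `Δ(G) ≥ 1`, `h(G) ≥ ⌊√Δ(G)⌋`;
in particular, with `n` vertices and `e` edges, `h(G) ≥ ⌊√(2e/n)⌋`. -/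
theorem stmt3 {V : Type*} [Fintype V] [DecidableEq V] (G : SimpleGraph V)
    [DecidableRel G.Adj] (hG : G.Connected) (hΔ : 1 ≤ G.maxDegree) :
    Nat.sqrt G.maxDegree ≤ homNumber G ∧
      ⌊Real.sqrt ((2 * (G.edgeFinset.card : ℝ)) / (Fintype.card V : ℝ))⌋₊ ≤ homNumber G := by
  have := hG.nonempty
  exact stmt3_general G
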